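/- Sharpness of the conforming lower bound: under the hypotheses of the conforming minorant estimate, taking u := e = û − ũ ∈ H¹°₋₁(Ω) yields equality: 2∫_Ω f e dx − ∫_Ω A∇(2ũ + e)·∇e dx = ‖∇e‖²_A; hence the supremum of M₋(∇ũ,u) = 2∫_Ω f u dx − ∫_Ω A∇(2ũ + u)·∇u dx over u ∈ H¹°₋₁(Ω) equals ‖∇(û − ũ)‖²_A and is attained. -/

import Mathlib

open MeasureTheory Filter Topology
open scoped RealInnerProductSpace

noncomputable section

/-- Euclidean space `ℝ^N`. -/
abbrev Euc (N : ℕ) := EuclideanSpace ℝ (Fin N)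

/-- The Poincaré constant `c_N = 2/(N-2)`. -/
def cN (N : ℕ) : ℝ := 2 / ((N : ℝ) - 2)

variable {N : ℕ}

/-- Squared weighted `L²_s(Ω)` norm: `∫_Ω (1+|x|²)^s u(x)² dx`. -/
def sqL2 (Ω : Set (Euc N)) (s : ℝ) (u : Euc N → ℝ) : ℝ :=
  ∫ x in Ω, (1 + ‖x‖ ^ 2) ^ s * u x ^ 2

/-- Weighted `L²_s(Ω)` norm. -/
def nrmL2 (Ω : Set (Euc N)) (s : ℝ) (u : Euc N → ℝ) : ℝ :=
  Real.sqrt (sqL2 Ω s u)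

/-- Membership in the weighted space `L²_s(Ω)` (scalar functions). -/
def MemL2 (Ω : Set (Euc N)) (s : ℝ) (u : Euc N → ℝ) : Prop :=
  AEStronglyMeasurable u (volume.restrict Ω) ∧
    Integrable (fun x => (1 + ‖x‖ ^ 2) ^ s * u x ^ 2) (volume.restrict Ω)

/-- Squared weighted `L²_s(Ω;ℝ^N)` norm for vector fields. -/
def sqL2V (Ω : Set (Euc N)) (s : ℝ) (v : Euc N → Euc N) : ℝ :=
  ∫ x in Ω, (1 + ‖x‖ ^ 2) ^ s * ‖v x‖ ^ 2

/-- Weighted `L²_s(Ω;ℝ^N)` norm for vector fields. -/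
def nrmL2V (Ω : Set (Euc N)) (s : ℝ) (v : Euc N → Euc N) : ℝ :=
  Real.sqrt (sqL2V Ω s v)

/-- Membership in the weighted space `L²_s(Ω;ℝ^N)` (vector fields). -/
def MemL2V (Ω : Set (Euc N)) (s : ℝ) (v : Euc N → Euc N) : Prop :=
  AEStronglyMeasurable v (volume.restrict Ω) ∧
    Integrable (fun x => (1 + ‖x‖ ^ 2) ^ s * ‖v x‖ ^ 2) (volume.restrict Ω)

/-- Test functions: `φ ∈ C_c^∞(Ω)`. -/
def IsTest (Ω : Set (Euc N)) (φ : Euc N → ℝ) : Prop :=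
  ContDiff ℝ (⊤ : ℕ∞) φ ∧ HasCompactSupport φ ∧ tsupport φ ⊆ Ω

/-- `g` is the weak gradient of `u` on `Ω`:
`∫_Ω u ∇φ = −∫_Ω φ g` for all test functions `φ`. -/
def IsWeakGrad (Ω : Set (Euc N)) (u : Euc N → ℝ) (g : Euc N → Euc N) : Prop :=
  ∀ φ : Euc N → ℝ, IsTest Ω φ →
    (∫ x in Ω, u x • gradient φ x) = - ∫ x in Ω, φ x • g x

/-- `d` is the weak divergence of the vector field `v` on `Ω`:
`∫_Ω v·∇φ = −∫_Ω d φ` for all test functions `φ`. -/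
def IsWeakDiv (Ω : Set (Euc N)) (v : Euc N → Euc N) (d : Euc N → ℝ) : Prop :=
  ∀ φ : Euc N → ℝ, IsTest Ω φ →
    (∫ x in Ω, ⟪v x, gradient φ x⟫) = - ∫ x in Ω, d x * φ x

/-- `u ∈ H¹°₋₁(Ω)` with weak gradient `g`: `u ∈ L²₋₁(Ω)`, `g ∈ L²(Ω;ℝ^N)` is the weak
gradient of `u`, and `u` is approximated by test functions in the natural norms. -/
def MemH10 (Ω : Set (Euc N)) (u : Euc N → ℝ) (g : Euc N → Euc N) : Prop :=
  MemL2 Ω (-1) u ∧ MemL2V Ω 0 g ∧ IsWeakGrad Ω u g ∧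
    ∃ φ : ℕ → Euc N → ℝ, (∀ n, IsTest Ω (φ n)) ∧
      Tendsto (fun n => nrmL2 Ω (-1) (fun x => u x - φ n x)) atTop (𝓝 0) ∧
      Tendsto (fun n => nrmL2V Ω 0 (fun x => g x - gradient (φ n) x)) atTop (𝓝 0)

/-- `g ∈ 𝒢`, the closure in `L²(Ω;ℝ^N)` of `{∇φ : φ ∈ C_c^∞(Ω)}`. -/
def MemG (Ω : Set (Euc N)) (g : Euc N → Euc N) : Prop :=
  MemL2V Ω 0 g ∧
    ∃ φ : ℕ → Euc N → ℝ, (∀ n, IsTest Ω (φ n)) ∧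
      Tendsto (fun n => nrmL2V Ω 0 (fun x => g x - gradient (φ n) x)) atTop (𝓝 0)

/-- `ψ ∈ D₀`, the set of weakly divergence-free fields in `L²(Ω;ℝ^N)`. -/
def MemD0 (Ω : Set (Euc N)) (ψ : Euc N → Euc N) : Prop :=
  MemL2V Ω 0 ψ ∧
    ∀ φ : Euc N → ℝ, IsTest Ω φ → (∫ x in Ω, ⟪ψ x, gradient φ x⟫) = 0

/-- The coefficient matrix field `A : Ω → ℝ^{N×N}`: measurable, essentially bounded,
symmetric, and uniformly coercive (`A(x)ξ·ξ ≥ α⁻²|ξ|²` for a.e. `x ∈ Ω`). -/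
structure Coeff (N : ℕ) (Ω : Set (Euc N)) where
  A : Euc N → Euc N →L[ℝ] Euc N
  α : ℝ
  α_pos : 0 < α
  meas : ∀ ξ : Euc N, AEStronglyMeasurable (fun x => A x ξ) (volume.restrict Ω)
  bdd : ∃ C : ℝ, ∀ᵐ x ∂(volume.restrict Ω), ∀ ξ : Euc N, ‖A x ξ‖ ≤ C * ‖ξ‖
  symm : ∀ x : Euc N, ∀ ξ η : Euc N, ⟪A x ξ, η⟫ = ⟪ξ, A x η⟫
  coer : ∀ᵐ x ∂(volume.restrict Ω), ∀ ξ : Euc N, α⁻¹ ^ 2 * ‖ξ‖ ^ 2 ≤ ⟪A x ξ, ξ⟫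

/-- The weighted inner product `⟨v,w⟩_A = ∫_Ω A v · w dx`. -/
def ipA (Ω : Set (Euc N)) (A : Euc N → Euc N →L[ℝ] Euc N) (v w : Euc N → Euc N) : ℝ :=
  ∫ x in Ω, ⟪A x (v x), w x⟫

/-- The squared `A`-weighted norm `‖v‖²_A = ∫_Ω A v · v dx`. -/
def sqA (Ω : Set (Euc N)) (A : Euc N → Euc N →L[ℝ] Euc N) (v : Euc N → Euc N) : ℝ :=
  ipA Ω A v v

/-- The `A`-weighted norm `‖v‖_A`. -/
def nrmA (Ω : Set (Euc N)) (A : Euc N → Euc N →L[ℝ] Euc N) (v : Euc N → Euc N) : ℝ :=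
  Real.sqrt (sqA Ω A v)

/-- `w = A⁻¹ v` (a.e. on `Ω`), with `w ∈ L²(Ω;ℝ^N)`. -/
def IsAInv (Ω : Set (Euc N)) (A : Euc N → Euc N →L[ℝ] Euc N) (v w : Euc N → Euc N) : Prop :=
  MemL2V Ω 0 w ∧ ∀ᵐ x ∂(volume.restrict Ω), A x (w x) = v x

/-!
Testing the weak equation for `û` against `u ∈ H¹°₋₁(Ω)` (allowed by density, since both sides are
continuous in the norm of `H¹°₋₁(Ω)`) turns `∫ f u` into `∫ A∇û·∇u`. With `e = û − ũ`, completing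
the square then gives
`2 ∫ f u − ∫ A∇(2ũ + u)·∇u = ‖∇e‖²_A − ‖∇(e − u)‖²_A`,
which is at most `‖∇e‖²_A`, with equality at `u = e`.
-/

section L2

variable {X 𝕜 E : Type*} [MeasurableSpace X] {μ : Measure X} [RCLike 𝕜] [NormedAddCommGroup E]

lemma lpNorm_two_eq_sqrt_integral {v : X → E} (hv : AEStronglyMeasurable v μ) :
    lpNorm v 2 μ = √(∫ x, ‖v x‖ ^ 2 ∂μ) := by
  simp [lpNorm_eq_integral_norm_rpow_toReal two_ne_zero ENNReal.ofNat_ne_top hv,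
    Real.sqrt_eq_rpow]

variable [InnerProductSpace 𝕜 E]

variable (𝕜) in
lemma integrable_inner_of_memLp_two {v w : X → E} (hv : MemLp v 2 μ) (hw : MemLp w 2 μ) :
    Integrable (fun x ↦ inner 𝕜 (v x) (w x)) μ := by
  refine (L2.integrable_inner (𝕜 := 𝕜) (hv.toLp v) (hw.toLp w)).congr ?_
  filter_upwards [hv.coeFn_toLp, hw.coeFn_toLp] with x hvx hwx
  rw [hvx, hwx]

variable (𝕜) in
lemma inner_toLp_eq_integral_inner {v w : X → E} (hv : MemLp v 2 μ) (hw : MemLp w 2 μ) :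
    inner 𝕜 (hv.toLp v) (hw.toLp w) = ∫ x, inner 𝕜 (v x) (w x) ∂μ := by
  refine (L2.inner_def _ _).trans (integral_congr_ae ?_)
  filter_upwards [hv.coeFn_toLp, hw.coeFn_toLp] with x hvx hwx
  rw [hvx, hwx]

variable (𝕜) in
lemma tendsto_integral_inner_of_tendsto_lpNorm {ι : Type*} {l : Filter ι} {v w : X → E}
    {W : ι → X → E} (hv : MemLp v 2 μ) (hw : MemLp w 2 μ) (hW : ∀ n, MemLp (W n) 2 μ)
    (hlim : Tendsto (fun n ↦ lpNorm (w - W n) 2 μ) l (𝓝 0)) :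
    Tendsto (fun n ↦ ∫ x, inner 𝕜 (v x) (W n x) ∂μ) l (𝓝 (∫ x, inner 𝕜 (v x) (w x) ∂μ)) := by
  have hW_toLp : Tendsto (fun n ↦ (hW n).toLp (W n)) l (𝓝 (hw.toLp w)) := by
    refine tendsto_iff_norm_sub_tendsto_zero.2 (hlim.congr fun n ↦ ?_)
    rw [← MemLp.toLp_sub, Lp.norm_toLp, toReal_eLpNorm ((hW n).sub hw).1, lpNorm_sub_comm]
  simpa only [inner_toLp_eq_integral_inner 𝕜] using
    (tendsto_const_nhds (x := hv.toLp v)).inner (𝕜 := 𝕜) hW_toLp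

end L2

section OperatorField

variable {X : Type*} [MeasurableSpace X] {μ : Measure X}

lemma aestronglyMeasurable_of_forall_apply {𝕜 E F : Type*} [RCLike 𝕜]
    [NormedAddCommGroup E] [NormedSpace 𝕜 E] [FiniteDimensional 𝕜 E]
    [NormedAddCommGroup F] [NormedSpace 𝕜 F] {A : X → E →L[𝕜] F}
    (hA : ∀ ξ, AEStronglyMeasurable (fun x ↦ A x ξ) μ) : AEStronglyMeasurable A μ := by
  let b := Module.finBasis 𝕜 E
  let coord i : StrongDual 𝕜 E := (b.coord i).toContinuousLinearMap
  have hA_sum : A = fun x ↦ ∑ i, ContinuousLinearMap.smulRightL 𝕜 E F (coord i) (A x (b i)) := by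
    ext x ξ
    have hξ : A x ξ = ∑ i, b.repr ξ i • A x (b i) := by
      simpa only [map_sum, map_smul] using congrArg (A x) (b.sum_repr ξ).symm
    simpa [coord] using hξ
  rw [hA_sum]
  exact Finset.aestronglyMeasurable_fun_sum _ fun i _ ↦
    (ContinuousLinearMap.continuous _).comp_aestronglyMeasurable (hA (b i))

lemma memLp_apply_of_memLp_top {𝕜 E F : Type*} [NontriviallyNormedField 𝕜]
    [NormedAddCommGroup E] [NormedSpace 𝕜 E] [NormedAddCommGroup F] [NormedSpace 𝕜 F]
    {p : ENNReal} {A : X → E →L[𝕜] F} {v : X → E} (hA : MemLp A ⊤ μ) (hv : MemLp v p μ) :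
    MemLp (fun x ↦ A x (v x)) p μ :=
  (ContinuousLinearMap.id 𝕜 (E →L[𝕜] F)).memLp_of_bilin p hA hv

variable {E : Type*} [NormedAddCommGroup E] [InnerProductSpace ℝ E]

lemma two_mul_inner_map_sub_eq_sub {T : E →ₗ[ℝ] E} (hT : T.IsSymmetric) (q r g : E) :
    2 * ⟪T (q + r), g⟫ - ⟪T ((2 : ℝ) • q + g), g⟫ = ⟪T r, r⟫ - ⟪T (r - g), r - g⟫ := by
  have hrg : ⟪T g, r⟫ = ⟪T r, g⟫ := by rw [hT, real_inner_comm]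
  simp only [map_add, map_sub, map_smul, inner_add_left, inner_sub_left, inner_sub_right,
    real_inner_smul_left]
  linarith

lemma two_mul_integral_inner_sub_eq_sub {A : X → E →L[ℝ] E} (hA : MemLp A ⊤ μ)
    (hA_symm : ∀ᵐ x ∂μ, (A x).IsSymmetric) {q r g : X → E}
    (hq : MemLp q 2 μ) (hr : MemLp r 2 μ) (hg : MemLp g 2 μ) :
    2 * (∫ x, ⟪A x (q x + r x), g x⟫ ∂μ) - ∫ x, ⟪A x ((2 : ℝ) • q x + g x), g x⟫ ∂μ =
      (∫ x, ⟪A x (r x), r x⟫ ∂μ) - ∫ x, ⟪A x (r x - g x), r x - g x⟫ ∂μ := by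
  have integrable_form {v w : X → E} (hv : MemLp v 2 μ) (hw : MemLp w 2 μ) :
      Integrable (fun x ↦ ⟪A x (v x), w x⟫) μ :=
    integrable_inner_of_memLp_two ℝ (memLp_apply_of_memLp_top hA hv) hw
  rw [← integral_const_mul,
    ← integral_sub ((integrable_form (v := fun x ↦ q x + r x) (hq.add hr) hg).const_mul 2)
      (integrable_form (v := fun x ↦ (2 : ℝ) • q x + g x) ((hq.const_smul 2).add hg) hg),
    ← integral_sub (integrable_form hr hr)
      (integrable_form (v := fun x ↦ r x - g x) (w := fun x ↦ r x - g x)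
        (hr.sub hg) (hr.sub hg))]
  refine integral_congr_ae ?_
  filter_upwards [hA_symm] with x hx
  exact two_mul_inner_map_sub_eq_sub hx (q x) (r x) (g x)

end OperatorField

section Weighted

variable {E F : Type*} [NormedAddCommGroup E] [NormedAddCommGroup F]

/-- The function `(1 + |x|²)^{s/2} v`. The map `v ↦ weighted s v` is an isometry of `L²_s` into
`L²`, which reduces weighted estimates to unweighted ones. -/
def weighted [NormedSpace ℝ F] (s : ℝ) (v : E → F) : E → F :=
  fun x ↦ (1 + ‖x‖ ^ 2) ^ (s / 2) • v x

lemma continuous_one_add_norm_sq_rpow (s : ℝ) : Continuous fun x : E ↦ (1 + ‖x‖ ^ 2) ^ s :=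
  Continuous.rpow_const (by fun_prop) fun x ↦ .inl (zero_lt_one_add_norm_sq x).ne'

section NormedSpace

variable [NormedSpace ℝ F]

lemma weighted_zero (v : E → F) : weighted 0 v = v := by
  ext x
  simp [weighted]

lemma weighted_sub (s : ℝ) (v w : E → F) : weighted s (v - w) = weighted s v - weighted s w :=
  funext fun _ ↦ smul_sub _ _ _

lemma norm_weighted_sq (s : ℝ) (v : E → F) (x : E) :
    ‖weighted s v x‖ ^ 2 = (1 + ‖x‖ ^ 2) ^ s * ‖v x‖ ^ 2 := by
  rw [weighted, norm_smul, mul_pow, Real.norm_eq_abs, sq_abs,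
    ← Real.rpow_mul_natCast (by positivity)]
  norm_num

variable [MeasurableSpace E] [OpensMeasurableSpace E] {μ : Measure E}

lemma memLp_weighted_of_hasCompactSupport [IsFiniteMeasureOnCompacts μ]
    {p : ENNReal} {v : E → F} (s : ℝ) (hv : Continuous v) (hv_supp : HasCompactSupport v) :
    MemLp (weighted s v) p μ :=
  ((continuous_one_add_norm_sq_rpow _).smul hv).memLp_of_hasCompactSupport hv_supp.smul_left

variable {s : ℝ} {v : E → F}

lemma aestronglyMeasurable_weighted (hv : AEStronglyMeasurable v μ) :
    AEStronglyMeasurable (weighted s v) μ :=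
  (continuous_one_add_norm_sq_rpow _).aestronglyMeasurable.smul hv

lemma memLp_two_weighted (hv : AEStronglyMeasurable v μ)
    (hv_sq : Integrable (fun x ↦ (1 + ‖x‖ ^ 2) ^ s * ‖v x‖ ^ 2) μ) :
    MemLp (weighted s v) 2 μ :=
  (memLp_two_iff_integrable_sq_norm (aestronglyMeasurable_weighted hv)).2 <| by
    simpa only [norm_weighted_sq] using hv_sq

lemma lpNorm_two_weighted (hv : AEStronglyMeasurable v μ) :
    lpNorm (weighted s v) 2 μ = √(∫ x, (1 + ‖x‖ ^ 2) ^ s * ‖v x‖ ^ 2 ∂μ) := by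
  simp only [lpNorm_two_eq_sqrt_integral (aestronglyMeasurable_weighted hv), norm_weighted_sq]

end NormedSpace

lemma inner_weighted_weighted_neg [InnerProductSpace ℝ F] (s : ℝ) (v w : E → F) (x : E) :
    ⟪weighted s v x, weighted (-s) w x⟫ = ⟪v x, w x⟫ := by
  have weight_cancel : (1 + ‖x‖ ^ 2) ^ (s / 2) * (1 + ‖x‖ ^ 2) ^ (-s / 2) = 1 := by
    rw [← Real.rpow_add (zero_lt_one_add_norm_sq x)]
    simp [neg_div]
  rw [weighted, weighted, real_inner_smul_left, real_inner_smul_right, ← mul_assoc, weight_cancel,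
    one_mul]

end Weighted

section Gradient

variable {H : Type*} [NormedAddCommGroup H] [InnerProductSpace ℝ H] [CompleteSpace H] {φ : H → ℝ}

lemma continuous_gradient_of_contDiff (hφ : ContDiff ℝ 1 φ) : Continuous (gradient φ) :=
  (InnerProductSpace.toDual ℝ H).symm.continuous.comp (hφ.continuous_fderiv one_ne_zero)

lemma hasCompactSupport_gradient (hφ : HasCompactSupport φ) : HasCompactSupport (gradient φ) :=
  (hφ.fderiv (𝕜 := ℝ)).comp_left (g := (InnerProductSpace.toDual ℝ H).symm) (map_zero _)

end Gradient

section WeightedSpaces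

variable {Ω : Set (Euc N)} {s : ℝ} {u φ : Euc N → ℝ} {v : Euc N → Euc N}

lemma IsTest.memLp_weighted (hφ : IsTest Ω φ) (s : ℝ) :
    MemLp (weighted s φ) 2 (volume.restrict Ω) :=
  memLp_weighted_of_hasCompactSupport s hφ.1.continuous hφ.2.1

lemma IsTest.memLp_gradient (hφ : IsTest Ω φ) : MemLp (gradient φ) 2 (volume.restrict Ω) :=
  (continuous_gradient_of_contDiff (hφ.1.of_le (by simp))).memLp_of_hasCompactSupport
    (hasCompactSupport_gradient hφ.2.1)

lemma MemL2.memLp_weighted (hu : MemL2 Ω s u) : MemLp (weighted s u) 2 (volume.restrict Ω) :=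
  memLp_two_weighted hu.1 (by simpa only [Real.norm_eq_abs, sq_abs] using hu.2)

lemma MemL2.neg (hu : MemL2 Ω s u) : MemL2 Ω s (fun x ↦ -u x) :=
  ⟨hu.1.neg, by simpa only [neg_sq] using hu.2⟩

lemma MemL2V.memLp (hv : MemL2V Ω 0 v) : MemLp v 2 (volume.restrict Ω) := by
  simpa only [weighted_zero] using memLp_two_weighted hv.1 hv.2

lemma nrmL2_eq_lpNorm (hu : AEStronglyMeasurable u (volume.restrict Ω)) :
    nrmL2 Ω s u = lpNorm (weighted s u) 2 (volume.restrict Ω) := by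
  simp only [nrmL2, sqL2, lpNorm_two_weighted hu, Real.norm_eq_abs, sq_abs]

lemma nrmL2V_zero_eq_lpNorm (hv : AEStronglyMeasurable v (volume.restrict Ω)) :
    nrmL2V Ω 0 v = lpNorm v 2 (volume.restrict Ω) := by
  rw [← weighted_zero v, lpNorm_two_weighted hv, weighted_zero, nrmL2V, sqL2V]

end WeightedSpaces

section WeakDivergence

variable {Ω : Set (Euc N)} {φ : ℕ → Euc N → ℝ}

lemma tendsto_integral_inner_gradient {v g : Euc N → Euc N} (hφ : ∀ n, IsTest Ω (φ n))
    (hv : MemLp v 2 (volume.restrict Ω)) (hg : MemL2V Ω 0 g)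
    (hlim : Tendsto (fun n ↦ nrmL2V Ω 0 (fun x ↦ g x - gradient (φ n) x)) atTop (𝓝 0)) :
    Tendsto (fun n ↦ ∫ x in Ω, ⟪v x, gradient (φ n) x⟫) atTop (𝓝 (∫ x in Ω, ⟪v x, g x⟫)) := by
  refine tendsto_integral_inner_of_tendsto_lpNorm ℝ hv hg.memLp (fun n ↦ (hφ n).memLp_gradient)
    (hlim.congr fun n ↦ ?_)
  exact nrmL2V_zero_eq_lpNorm (hg.1.sub (hφ n).memLp_gradient.1)

lemma tendsto_integral_mul_test {s : ℝ} {d u : Euc N → ℝ} (hφ : ∀ n, IsTest Ω (φ n))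
    (hd : MemL2 Ω s d) (hu : MemL2 Ω (-s) u)
    (hlim : Tendsto (fun n ↦ nrmL2 Ω (-s) (fun x ↦ u x - φ n x)) atTop (𝓝 0)) :
    Tendsto (fun n ↦ ∫ x in Ω, d x * φ n x) atTop (𝓝 (∫ x in Ω, d x * u x)) := by
  have hlim_weighted : Tendsto (fun n ↦ lpNorm (weighted (-s) u - weighted (-s) (φ n)) 2
      (volume.restrict Ω)) atTop (𝓝 0) := by
    refine hlim.congr fun n ↦ ?_
    rw [← weighted_sub]
    exact nrmL2_eq_lpNorm (hu.1.sub (hφ n).1.continuous.aestronglyMeasurable)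
  have inner_eq_mul (x : Euc N) (ψ : Euc N → ℝ) :
      ⟪weighted s d x, weighted (-s) ψ x⟫ = d x * ψ x :=
    (inner_weighted_weighted_neg s d ψ x).trans (mul_comm _ _)
  simpa only [inner_eq_mul] using
    tendsto_integral_inner_of_tendsto_lpNorm ℝ hd.memLp_weighted hu.memLp_weighted
      (fun n ↦ (hφ n).memLp_weighted (-s)) hlim_weighted

lemma IsWeakDiv.integral_inner_eq_neg_integral_mul {v : Euc N → Euc N} {d : Euc N → ℝ}
    (hvd : IsWeakDiv Ω v d) (hv : MemLp v 2 (volume.restrict Ω)) (hd : MemL2 Ω 1 d)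
    {u : Euc N → ℝ} {g : Euc N → Euc N} (hu : MemH10 Ω u g) :
    (∫ x in Ω, ⟪v x, g x⟫) = - ∫ x in Ω, d x * u x := by
  obtain ⟨hu_mem, hg_mem, -, φ, hφ, hφ_u, hφ_g⟩ := hu
  refine tendsto_nhds_unique (tendsto_integral_inner_gradient hφ hv hg_mem hφ_g) ?_
  exact (tendsto_integral_mul_test hφ hd hu_mem hφ_u).neg.congr fun n ↦ (hvd (φ n) (hφ n)).symm

end WeakDivergence

section Coefficients

variable {Ω : Set (Euc N)}

lemma Coeff.memLp_top (M : Coeff N Ω) : MemLp M.A ⊤ (volume.restrict Ω) := by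
  obtain ⟨C, hC⟩ := M.bdd
  refine memLp_top_of_bound (aestronglyMeasurable_of_forall_apply M.meas) |C| ?_
  filter_upwards [hC] with x hx
  refine (M.A x).opNorm_le_bound (abs_nonneg C) fun ξ ↦ (hx ξ).trans ?_
  gcongr
  exact le_abs_self C

lemma Coeff.ae_isPositive (M : Coeff N Ω) : ∀ᵐ x ∂volume.restrict Ω, (M.A x).IsPositive := by
  filter_upwards [M.coer] with x hx
  exact (ContinuousLinearMap.isPositive_iff _).2
    ⟨M.symm x, fun ξ ↦ (by positivity : (0 : ℝ) ≤ M.α⁻¹ ^ 2 * ‖ξ‖ ^ 2).trans (hx ξ)⟩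

variable {A : Euc N → Euc N →L[ℝ] Euc N}

lemma sqA_nonneg (hA_pos : ∀ᵐ x ∂volume.restrict Ω, (A x).IsPositive) (v : Euc N → Euc N) :
    0 ≤ sqA Ω A v :=
  integral_nonneg_of_ae (hA_pos.mono fun x hx ↦ hx.inner_nonneg_left (v x))

lemma sqA_zero : sqA Ω A (fun _ ↦ 0) = 0 := by
  simp [sqA, ipA]

end Coefficients

/-- The minorant `M₋(q, u) = 2 ∫_Ω f u dx − ∫_Ω A(2q + ∇u)·∇u dx`. The gradient of `u` is passed
as a separate argument `g`. -/
def minorant (Ω : Set (Euc N)) (A : Euc N → Euc N →L[ℝ] Euc N) (f : Euc N → ℝ)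
    (q : Euc N → Euc N) (u : Euc N → ℝ) (g : Euc N → Euc N) : ℝ :=
  2 * (∫ x in Ω, f x * u x) - ∫ x in Ω, ⟪A x ((2 : ℝ) • q x + g x), g x⟫

section Minorant

variable {Ω : Set (Euc N)} {A : Euc N → Euc N →L[ℝ] Euc N} {f e : Euc N → ℝ}
  {q r : Euc N → Euc N}

lemma minorant_eq_sqA_sub_sqA (hA : MemLp A ⊤ (volume.restrict Ω))
    (hA_symm : ∀ᵐ x ∂volume.restrict Ω, (A x).IsSymmetric) (hf : MemL2 Ω 1 f)
    (hq : MemL2V Ω 0 q) (hr : MemL2V Ω 0 r)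
    (hdiv : IsWeakDiv Ω (fun x ↦ A x (q x + r x)) (fun x ↦ -f x))
    {u : Euc N → ℝ} {g : Euc N → Euc N} (hu : MemH10 Ω u g) :
    minorant Ω A f q u g = sqA Ω A r - sqA Ω A (fun x ↦ r x - g x) := by
  have hflux := memLp_apply_of_memLp_top hA (hq.memLp.add hr.memLp)
  have weak_eq : (∫ x in Ω, ⟪A x (q x + r x), g x⟫) = ∫ x in Ω, f x * u x := by
    simpa only [neg_mul, integral_neg, neg_neg] using
      hdiv.integral_inner_eq_neg_integral_mul hflux hf.neg hu
  rw [minorant, ← weak_eq]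
  exact two_mul_integral_inner_sub_eq_sub hA hA_symm hq.memLp hr.memLp hu.2.1.memLp

/-- Here `q` plays the role of `∇ũ` and `q + r` that of `∇û`. -/
theorem stmt_7_general (hA : MemLp A ⊤ (volume.restrict Ω))
    (hA_pos : ∀ᵐ x ∂volume.restrict Ω, (A x).IsPositive) (hf : MemL2 Ω 1 f)
    (hq : MemL2V Ω 0 q) (he : MemH10 Ω e r)
    (hweak : ∀ φ : Euc N → ℝ, IsTest Ω φ →
      (∫ x in Ω, ⟪A x (q x + r x), gradient φ x⟫) = ∫ x in Ω, f x * φ x) :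
    minorant Ω A f q e r = sqA Ω A r ∧
      IsGreatest {m : ℝ | ∃ (u : Euc N → ℝ) (g : Euc N → Euc N),
        MemH10 Ω u g ∧ m = minorant Ω A f q u g} (sqA Ω A r) := by
  have hA_symm := hA_pos.mono fun _ hx ↦ hx.isSymmetric
  have hdiv : IsWeakDiv Ω (fun x ↦ A x (q x + r x)) (fun x ↦ -f x) := fun φ hφ ↦ by
    simpa only [neg_mul, integral_neg, neg_neg] using hweak φ hφ
  have minorant_eq {u g} (hu : MemH10 Ω u g) :=
    minorant_eq_sqA_sub_sqA hA hA_symm hf hq he.2.1 hdiv hu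
  have sharp : minorant Ω A f q e r = sqA Ω A r := by
    simp only [minorant_eq he, sub_self, sqA_zero, sub_zero]
  refine ⟨sharp, ⟨e, r, he, sharp.symm⟩, ?_⟩
  rintro _ ⟨u, g, hu, rfl⟩
  rw [minorant_eq hu]
  exact sub_le_self _ (sqA_nonneg hA_pos _)

end Minorant

/-- Sharpness of the conforming lower bound: `u = e` gives equality, and the supremum of the
minorant equals `‖∇(û − ũ)‖²_A` and is attained. -/
theorem stmt_7 (Ω : Set (Euc N)) (hΩ : IsOpen Ω) (hN : 3 ≤ N) (M : Coeff N Ω)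
    (f : Euc N → ℝ) (hf : MemL2 Ω 1 f)
    (uh : Euc N → ℝ) (gu : Euc N → Euc N)
    (huh : MemL2 Ω (-1) uh) (hgu : MemL2V Ω 0 gu) (hguw : IsWeakGrad Ω uh gu)
    (hweak : ∀ φ : Euc N → ℝ, IsTest Ω φ →
      (∫ x in Ω, ⟪M.A x (gu x), gradient φ x⟫) = ∫ x in Ω, f x * φ x)
    (ut : Euc N → ℝ) (gt : Euc N → Euc N)
    (hut : MemL2 Ω (-1) ut) (hgt : MemL2V Ω 0 gt) (hgtw : IsWeakGrad Ω ut gt)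
    (he : MemH10 Ω (fun x => uh x - ut x) (fun x => gu x - gt x)) :
    2 * (∫ x in Ω, f x * (uh x - ut x)) -
        (∫ x in Ω, ⟪M.A x ((2 : ℝ) • gt x + (gu x - gt x)), gu x - gt x⟫) =
      sqA Ω M.A (fun x => gu x - gt x) ∧
    IsGreatest {r : ℝ | ∃ (u : Euc N → ℝ) (g : Euc N → Euc N), MemH10 Ω u g ∧
        r = 2 * (∫ x in Ω, f x * u x) -
          ∫ x in Ω, ⟪M.A x ((2 : ℝ) • gt x + g x), g x⟫}
      (sqA Ω M.A (fun x => gu x - gt x)) :=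
  stmt_7_general M.memLp_top M.ae_isPositive hf hgt he
    (by simpa only [add_sub_cancel] using hweak)
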